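/- Let K be a simplicial complex in a real vector space E, with underlying space |K| = ⋃_{s a face of K} convexHull(s), and let τ be a face of K. Then the complement of the open star of τ inside |K| is exactly the union of the closed simplices not containing τ: |K| ∖ st̊(τ) = ⋃ { convexHull(s) : s a face of K with τ ⊄ s }. -/

import Mathlib

variable {E : Type*} [AddCommGroup E] [Module ℝ E]

/-- The combinatorial interior of a finite set `s`: the convex hull of `s` minus the
convex hulls of all nonempty proper subsets of `s`. -/
def combInterior (s : Finset E) : Set E :=
  convexHull ℝ (s : Set E) \
    ⋃ (t : Finset E) (_ : t ⊂ s) (_ : t.Nonempty), convexHull ℝ (t : Set E)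

/-- The open star of a face `τ` of a simplicial complex `K`: the union of the
combinatorial interiors of all faces of `K` containing `τ`. -/
def openStar (K : Geometry.SimplicialComplex ℝ E) (τ : Finset E) : Set E :=
  ⋃ (s : Finset E) (_ : s ∈ K.faces) (_ : τ ⊆ s), combInterior s

/-!
A point `x` of `|K|` lies in the combinatorial interior of a face `s` exactly when `s` is minimal
among the finite sets whose convex hull contains `x`. Since closed faces intersect in the convex
hull of their common vertices, this minimal face is contained in every face whose convex hull
contains `x`. Hence `x` lies in the open star of `τ` if and only if all faces whose convex hull
contains `x` contain `τ`, and the theorem is the negation of this criterion.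
-/

theorem finset_nonempty_of_mem_convexHull {𝕜 F : Type*} [Semiring 𝕜] [PartialOrder 𝕜]
    [AddCommMonoid F] [Module 𝕜 F] {s : Finset F} {x : F}
    (hx : x ∈ convexHull 𝕜 (s : Set F)) : s.Nonempty :=
  Finset.coe_nonempty.1 (convexHull_nonempty_iff.1 ⟨x, hx⟩)

section

variable {K : Geometry.SimplicialComplex ℝ E} {s t τ : Finset E} {x : E}

theorem mem_combInterior_iff_minimal :
    x ∈ combInterior s ↔ Minimal (fun t : Finset E ↦ x ∈ convexHull ℝ (t : Set E)) s := by
  simp only [combInterior, Set.mem_sdiff, Set.mem_iUnion, exists_prop, minimal_iff_forall_lt]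
  grind [finset_nonempty_of_mem_convexHull]

theorem exists_subset_mem_combInterior (hx : x ∈ convexHull ℝ (s : Set E)) :
    ∃ t ⊆ s, x ∈ combInterior t := by
  simp only [mem_combInterior_iff_minimal]
  exact exists_minimal_le_of_wellFoundedLT _ s hx

theorem subset_of_mem_combInterior_of_mem_convexHull (hs : s ∈ K.faces) (ht : t ∈ K.faces)
    (hxs : x ∈ combInterior s) (hxt : x ∈ convexHull ℝ (t : Set E)) : s ⊆ t := by
  classical
  have hx_inter : x ∈ convexHull ℝ ((s ∩ t : Finset E) : Set E) := by
    rw [Finset.coe_inter]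
    exact K.inter_subset_convexHull hs ht ⟨hxs.1, hxt⟩
  have hs_inter : s ⊆ s ∩ t :=
    (mem_combInterior_iff_minimal.1 hxs).le_of_le hx_inter Finset.inter_subset_left
  exact hs_inter.trans Finset.inter_subset_right

theorem exists_mem_faces_mem_combInterior (hx : x ∈ K.space) :
    ∃ s ∈ K.faces, x ∈ combInterior s := by
  obtain ⟨s, hs, hxs⟩ := Geometry.SimplicialComplex.mem_space_iff.1 hx
  obtain ⟨t, hts, hxt⟩ := exists_subset_mem_combInterior hxs
  exact ⟨t, K.down_closed hs hts (finset_nonempty_of_mem_convexHull hxt.1), hxt⟩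

theorem mem_openStar_iff_forall_faces (hx : x ∈ K.space) :
    x ∈ openStar K τ ↔ ∀ s ∈ K.faces, x ∈ convexHull ℝ (s : Set E) → τ ⊆ s := by
  simp only [openStar, Set.mem_iUnion, exists_prop]
  constructor
  · rintro ⟨t, ht, hτt, hxt⟩ s hs hxs
    exact hτt.trans (subset_of_mem_combInterior_of_mem_convexHull ht hs hxt hxs)
  · intro h
    obtain ⟨t, ht, hxt⟩ := exists_mem_faces_mem_combInterior hx
    exact ⟨t, ht, h t ht hxt.1, hxt⟩

end

/-- The complement of the open star of a face `τ` inside the underlying space `|K|`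
is the union of the closed simplices (convex hulls of faces) not containing `τ`. -/
theorem space_diff_openStar_eq (K : Geometry.SimplicialComplex ℝ E)
    (τ : Finset E) (hτ : τ ∈ K.faces) :
    K.space \ openStar K τ =
      ⋃ (s : Finset E) (_ : s ∈ K.faces) (_ : ¬ τ ⊆ s), convexHull ℝ (s : Set E) := by
  ext x
  simp only [Set.mem_sdiff, Set.mem_iUnion, exists_prop]
  constructor
  · rintro ⟨hx, hx_star⟩
    rw [mem_openStar_iff_forall_faces hx] at hx_star
    push Not at hx_star
    obtain ⟨s, hs, hxs, hτs⟩ := hx_star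
    exact ⟨s, hs, hτs, hxs⟩
  · rintro ⟨s, hs, hτs, hxs⟩
    have hx : x ∈ K.space := Geometry.SimplicialComplex.convexHull_subset_space hs hxs
    exact ⟨hx, fun hx_star ↦ hτs ((mem_openStar_iff_forall_faces hx).1 hx_star s hs hxs)⟩
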